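/- arXiv:1801.09871 — 3 statements merged into one kernel-verified Lean document; each statement's English description precedes it below -/
import Mathlib

section
/- The packing chromatic number of the graph G_0 is at least 9; that is, G_0 admits no k-packing coloring for any k ≤ 8. -/
/-- `W` is an `i`-packing in `G`: any two distinct vertices of `W` are at
graph distance greater than `i` in `G`. -/
def IsPacking {V : Type*} (G : SimpleGraph V) (i : ℕ) (W : Set V) : Prop :=
  ∀ u ∈ W, ∀ v ∈ W, u ≠ v → i < G.dist u v

/-- `c` is a `k`-packing coloring of `G`: every color lies in `{1, …, k}` and
for each `i ∈ {1, …, k}` the color class `c⁻¹(i)` is an `i`-packing. -/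
def IsPackingColoring {V : Type*} (G : SimpleGraph V) (k : ℕ) (c : V → ℕ) : Prop :=
  (∀ v, 1 ≤ c v ∧ c v ≤ k) ∧ ∀ i, 1 ≤ i → i ≤ k → IsPacking G i {v | c v = i}

/-- The packing chromatic number: the least `k` admitting a `k`-packing coloring. -/
noncomputable def packingChromaticNumber {V : Type*} (G : SimpleGraph V) : ℕ :=
  sInf {k | ∃ c : V → ℕ, IsPackingColoring G k c}


/-- Edges of `H`; vertices `y1,…,y7` are `0,…,6`, `z1,…,z7` are `7,…,13`,
and `w` is `14`. -/
def Hedges : List (Fin 15 × Fin 15) :=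
  [(0,1),(1,2),(2,6),(6,5),(5,4),(4,0),(1,3),(3,5),
   (7,8),(8,9),(9,13),(13,12),(12,11),(11,7),(8,10),(10,12),
   (3,14),(14,10),(2,7),(4,13)]

/-- The graph `H`. -/
def Hgraph : SimpleGraph (Fin 15) :=
  SimpleGraph.fromRel (fun u v => (u, v) ∈ Hedges)

/-- Glue two disjoint copies of `G` together with five new vertices
`Sum.inr (Sum.inr i)` for `i : Fin 5`: the `i`-th new vertex is adjacent
exactly to `p i` in the first copy and to `q i` in the second copy. -/
def glue {V : Type*} (G : SimpleGraph V) (p q : Fin 5 → V) :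
    SimpleGraph (V ⊕ V ⊕ Fin 5) :=
  SimpleGraph.fromRel (fun u v =>
    match u, v with
    | Sum.inl a, Sum.inl b => G.Adj a b
    | Sum.inr (Sum.inl a), Sum.inr (Sum.inl b) => G.Adj a b
    | Sum.inr (Sum.inr i), Sum.inl a => a = p i
    | Sum.inr (Sum.inr i), Sum.inr (Sum.inl b) => b = q i
    | _, _ => False)

/-- Attachment points of `a,b,c,d,x` in the first copy (`H'`):
`a ↦ y5`, `b ↦ z7`, `c ↦ y3`, `d ↦ z1`, `x ↦ w`. -/
def pH : Fin 5 → Fin 15 := ![4, 13, 2, 7, 14]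

/-- Attachment points of `a,b,c,d,x` in the second copy (`H''`):
`a ↦ y1`, `b ↦ z3`, `c ↦ z5`, `d ↦ y7`, `x ↦ w`. -/
def qH : Fin 5 → Fin 15 := ![0, 9, 11, 6, 14]

/-- The graph `G₀`: two disjoint copies of `H` plus the five vertices
`a,b,c,d,x`, which are `Sum.inr (Sum.inr 0), …, Sum.inr (Sum.inr 4)`. -/
def G₀ : SimpleGraph (Fin 15 ⊕ Fin 15 ⊕ Fin 5) := glue Hgraph pH qH

/-!
Write `H` for `Hgraph`. Three finite facts drive the proof.

* A `1`-, a `2`- and a `3`-packing together cover at most eleven of the fifteen vertices of `H`;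
  this is checked by exhaustive search.
* `H` has diameter `4`, so in a packing coloring no color above `3` repeats within a copy of `H`.
* In `G₀`, every vertex of one copy is within distance `6` of every vertex of the other, so no
  color above `5` occurs in both copies.

Hence each copy carries at least four colors from `{4, …, 8}`, while the two copies share at most
the colors `4` and `5`: this would require `4 + 4 ≤ 5 + 2`.
-/

open Finset SimpleGraph

section Distance

variable {V W : Type*} {G : SimpleGraph V} {G' : SimpleGraph W}

theorem exists_walk_length_le_of_descent {v : V} (f : V → ℕ)
    (hf : ∀ u, u = v ∨ ∃ w, G.Adj u w ∧ f w < f u) (u : V) :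
    ∃ p : G.Walk u v, p.length ≤ f u := by
  induction hn : f u using Nat.strong_induction_on generalizing u with
  | _ n ih =>
    obtain rfl | ⟨w, hadj, hlt⟩ := hf u
    · exact ⟨.nil, Nat.zero_le n⟩
    · obtain ⟨p, hp⟩ := ih (f w) (hn ▸ hlt) w rfl
      exact ⟨.cons hadj p, by rw [Walk.length_cons]; omega⟩

theorem dist_map_le_of_reachable (f : G →g G') {u v : V} (h : G.Reachable u v) :
    G'.dist (f u) (f v) ≤ G.dist u v := by
  obtain ⟨p, hp⟩ := h.exists_walk_length_eq_dist
  calc G'.dist (f u) (f v) ≤ (p.map f).length := dist_le _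
    _ = G.dist u v := by rw [Walk.length_map, hp]

end Distance

section PackingColoring

variable {V W : Type*} {G : SimpleGraph V} {G' : SimpleGraph W} {k : ℕ} {c : V → ℕ}

theorem IsPackingColoring.lt_dist (hc : IsPackingColoring G k c) {u v : V} (huv : u ≠ v)
    (h : c u = c v) : c u < G.dist u v :=
  hc.2 (c u) (hc.1 u).1 (hc.1 u).2 u rfl v h.symm huv

theorem IsPackingColoring.injOn_of_dist_le (hc : IsPackingColoring G k c) {m : ℕ}
    (hm : ∀ u v, G.dist u v ≤ m) : Set.InjOn c {v | m ≤ c v} := by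
  intro u hu v _ h
  by_contra huv
  exact (hc.lt_dist huv h).not_ge ((hm u v).trans hu)

theorem IsPackingColoring.comp_copy {c : W → ℕ} (hc : IsPackingColoring G' k c)
    (hG : G.Connected) (f : Copy G G') : IsPackingColoring G k (c ∘ f) := by
  refine ⟨fun v => hc.1 (f v), ?_⟩
  rintro i hi hik u rfl v hv huv
  calc c (f u) < G'.dist (f u) (f v) := hc.lt_dist (f.injective.ne huv) hv.symm
    _ ≤ G.dist u v := dist_map_le_of_reachable f.toHom (hG u v)

theorem isPackingColoring_of_injective (hc : Function.Injective c)
    (hk : ∀ v, 1 ≤ c v ∧ c v ≤ k) : IsPackingColoring G k c :=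
  ⟨hk, fun _ _ _ _ hu _ hv huv => absurd (hc (hu.trans hv.symm)) huv⟩

theorem exists_isPackingColoring [Finite V] (G : SimpleGraph V) :
    ∃ k, ∃ c : V → ℕ, IsPackingColoring G k c := by
  obtain ⟨n, ⟨e⟩⟩ := Finite.exists_equiv_fin V
  refine ⟨n, fun v => e v + 1, isPackingColoring_of_injective (fun u v h => ?_) fun v => ?_⟩
  · exact e.injective (Fin.ext (Nat.succ_injective h))
  · exact ⟨Nat.succ_pos _, (e v).isLt⟩

theorem le_packingChromaticNumber [Finite V] {n : ℕ}
    (h : ∀ k (c : V → ℕ), IsPackingColoring G k c → n ≤ k) : n ≤ packingChromaticNumber G :=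
  le_csInf (exists_isPackingColoring G) fun k ⟨c, hc⟩ => h k c hc

end PackingColoring

section Search

variable {V : Type*} {d : V → V → ℕ} {m : ℕ}

/-- Exhaustive search for a partial packing coloring with respect to the distance bound `d`:
whether the vertices in the list, all but at most `b` of them, can receive colors from
`{1, …, m}` compatibly with the pairs `(vertex, color)` already fixed in `s`. -/
def canColorAllBut (d : V → V → ℕ) (m : ℕ) : List V → (b : ℕ) → (s : List (V × ℕ)) → Bool
  | [], _, _ => true
  | v :: vs, b, s =>
    ((List.range' 1 m).any fun i =>
      s.all (fun p => p.2 != i || decide (i < d p.1 v)) && canColorAllBut d m vs b ((v, i) :: s)) ||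
    (b != 0 && canColorAllBut d m vs (b - 1) s)

theorem canColorAllBut_of_countP_le {c : V → ℕ} (hpos : ∀ v, 1 ≤ c v)
    (hc : ∀ u v, u ≠ v → c u = c v → c u < d u v) {vs : List V} (hvs : vs.Nodup) {b : ℕ}
    (hb : vs.countP (m < c ·) ≤ b) {s : List (V × ℕ)} (hs : ∀ p ∈ s, p.1 ∉ vs ∧ c p.1 = p.2) :
    canColorAllBut d m vs b s = true := by
  induction vs generalizing b s with
  | nil => rfl
  | cons v vs ih =>
    obtain ⟨hv, hvs⟩ := List.nodup_cons.1 hvs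
    have hs_tail : ∀ p ∈ s, p.1 ∉ vs ∧ c p.1 = p.2 := fun p hp =>
      ⟨fun h => (hs p hp).1 (List.mem_cons_of_mem v h), (hs p hp).2⟩
    simp only [canColorAllBut, Bool.or_eq_true, List.any_eq_true, Bool.and_eq_true]
    by_cases hcv : m < c v
    · rw [List.countP_cons_of_pos (by simpa using hcv)] at hb
      exact Or.inr ⟨bne_iff_ne.2 (by omega), ih hvs (by omega) hs_tail⟩
    · rw [List.countP_cons_of_neg (by simpa using hcv)] at hb
      refine Or.inl ⟨c v, List.mem_range'_1.2 ⟨hpos v, by omega⟩, ?_, ih hvs hb ?_⟩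
      · simp only [List.all_eq_true, Bool.or_eq_true, bne_iff_ne, decide_eq_true_eq]
        intro p hp
        obtain ⟨hpv, hcp⟩ := hs p hp
        refine or_iff_not_imp_left.2 fun h => ?_
        have hcolor : c p.1 = c v := hcp.trans (not_not.1 h)
        exact hcolor ▸ hc p.1 v (fun h => hpv (h ▸ List.mem_cons_self)) hcolor
      · exact List.forall_mem_cons.2 ⟨⟨hv, rfl⟩, hs_tail⟩

theorem lt_card_of_canColorAllBut_eq_false {n b : ℕ} {d : Fin n → Fin n → ℕ} {c : Fin n → ℕ}
    (hpos : ∀ v, 1 ≤ c v) (hc : ∀ u v, u ≠ v → c u = c v → c u < d u v)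
    (h : canColorAllBut d m (List.finRange n) b [] = false) : b < #{v | m < c v} := by
  by_contra! hle
  have hcount : (List.finRange n).countP (m < c ·) ≤ b := by
    rw [List.countP_eq_length_filter, ← List.toFinset_card_of_nodup
      ((List.nodup_finRange n).filter _), List.toFinset_filter, List.toFinset_finRange]
    simpa only [decide_eq_true_eq] using hle
  exact Bool.false_ne_true <| h.symm.trans <|
    canColorAllBut_of_countP_le hpos hc (List.nodup_finRange n) hcount (by simp)

end Search

section Glue

variable {V : Type*} {G : SimpleGraph V} {p q : Fin 5 → V}

/-- The first copy of `G` inside `glue G p q`. -/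
def glueLeft (G : SimpleGraph V) (p q : Fin 5 → V) : Copy G (glue G p q) where
  toHom := ⟨Sum.inl, fun h => ⟨Sum.inl_injective.ne h.ne, Or.inl h⟩⟩
  injective' := Sum.inl_injective

/-- The second copy of `G` inside `glue G p q`. -/
def glueRight (G : SimpleGraph V) (p q : Fin 5 → V) : Copy G (glue G p q) where
  toHom := ⟨Sum.inr ∘ Sum.inl, fun h =>
    ⟨(Sum.inr_injective.comp Sum.inl_injective).ne h.ne, Or.inl h⟩⟩
  injective' := Sum.inr_injective.comp Sum.inl_injective

theorem glueLeft_ne_glueRight (u v : V) : glueLeft G p q u ≠ glueRight G p q v :=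
  Sum.inl_ne_inr

theorem exists_walk_glueLeft_glueRight (i : Fin 5) :
    ∃ w : (glue G p q).Walk (glueLeft G p q (p i)) (glueRight G p q (q i)), w.length = 2 := by
  have hleft : (glue G p q).Adj (glueLeft G p q (p i)) (Sum.inr (Sum.inr i)) :=
    ⟨Sum.inl_ne_inr, Or.inr rfl⟩
  have hright : (glue G p q).Adj (Sum.inr (Sum.inr i)) (glueRight G p q (q i)) :=
    ⟨Sum.inr_injective.ne Sum.inr_ne_inl, Or.inl rfl⟩
  exact ⟨.cons hleft (.cons hright .nil), rfl⟩

theorem dist_glueLeft_glueRight_le (hG : G.Connected) (i : Fin 5) (u v : V) :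
    (glue G p q).dist (glueLeft G p q u) (glueRight G p q v) ≤
      G.dist u (p i) + 2 + G.dist (q i) v := by
  obtain ⟨w₁, hw₁⟩ := hG.exists_walk_length_eq_dist u (p i)
  obtain ⟨w₂, hw₂⟩ := exists_walk_glueLeft_glueRight (G := G) (p := p) (q := q) i
  obtain ⟨w₃, hw₃⟩ := hG.exists_walk_length_eq_dist (q i) v
  refine (dist_le (((w₁.map (glueLeft G p q).toHom).append w₂).append
    (w₃.map (glueRight G p q).toHom))).trans_eq ?_
  rw [Walk.length_append, Walk.length_append, Walk.length_map, Walk.length_map, hw₁, hw₂, hw₃]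

end Glue

section Hgraph

instance : DecidableRel Hgraph.Adj :=
  inferInstanceAs (DecidableRel (fromRel fun u v => (u, v) ∈ Hedges).Adj)

/-- The distance matrix of `Hgraph`, with rows and columns in the order `y1, …, y7, z1, …, z7, w`.
Only the upper bound `Hgraph.dist u v ≤ HdistMatrix u v` is established. -/
def HdistMatrix : Fin 15 → Fin 15 → ℕ :=
  ![![0, 1, 2, 2, 1, 2, 3, 3, 4, 3, 4, 4, 3, 2, 3],
    ![1, 0, 1, 1, 2, 2, 2, 2, 3, 4, 3, 3, 4, 3, 2],
    ![2, 1, 0, 2, 3, 2, 1, 1, 2, 3, 3, 2, 3, 4, 3],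
    ![2, 1, 2, 0, 2, 1, 2, 3, 3, 4, 2, 4, 3, 3, 1],
    ![1, 2, 3, 2, 0, 1, 2, 4, 3, 2, 3, 3, 2, 1, 3],
    ![2, 2, 2, 1, 1, 0, 1, 3, 4, 3, 3, 4, 3, 2, 2],
    ![3, 2, 1, 2, 2, 1, 0, 2, 3, 4, 4, 3, 4, 3, 3],
    ![3, 2, 1, 3, 4, 3, 2, 0, 1, 2, 2, 1, 2, 3, 3],
    ![4, 3, 2, 3, 3, 4, 3, 1, 0, 1, 1, 2, 2, 2, 2],
    ![3, 4, 3, 4, 2, 3, 4, 2, 1, 0, 2, 3, 2, 1, 3],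
    ![4, 3, 3, 2, 3, 3, 4, 2, 1, 2, 0, 2, 1, 2, 1],
    ![4, 3, 2, 4, 3, 4, 3, 1, 2, 3, 2, 0, 1, 2, 3],
    ![3, 4, 3, 3, 2, 3, 4, 2, 2, 2, 1, 1, 0, 1, 2],
    ![2, 3, 4, 3, 1, 2, 3, 3, 2, 1, 2, 2, 1, 0, 3],
    ![3, 2, 3, 1, 3, 2, 3, 3, 2, 3, 1, 3, 2, 3, 0]]

theorem exists_adj_HdistMatrix_lt :
    ∀ u v, u = v ∨ ∃ w, Hgraph.Adj u w ∧ HdistMatrix w v < HdistMatrix u v := by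
  decide +kernel

theorem exists_walk_Hgraph_length_le (u v : Fin 15) :
    ∃ p : Hgraph.Walk u v, p.length ≤ HdistMatrix u v :=
  exists_walk_length_le_of_descent (HdistMatrix · v) (exists_adj_HdistMatrix_lt · v) u

theorem Hgraph_connected : Hgraph.Connected :=
  ⟨fun u v => (exists_walk_Hgraph_length_le u v).nonempty⟩

theorem Hgraph_dist_le (u v : Fin 15) : Hgraph.dist u v ≤ HdistMatrix u v :=
  let ⟨p, hp⟩ := exists_walk_Hgraph_length_le u v
  (dist_le p).trans hp

theorem Hgraph_dist_le_four (u v : Fin 15) : Hgraph.dist u v ≤ 4 :=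
  (Hgraph_dist_le u v).trans ((by decide +kernel : ∀ u v, HdistMatrix u v ≤ 4) u v)

theorem canColorAllBut_three_Hgraph_eq_false :
    canColorAllBut HdistMatrix 3 (List.finRange 15) 3 [] = false := by
  decide +kernel

theorem four_le_card_three_lt_of_isPackingColoring_Hgraph {k : ℕ} {c : Fin 15 → ℕ}
    (hc : IsPackingColoring Hgraph k c) : 4 ≤ #{v | 3 < c v} :=
  lt_card_of_canColorAllBut_eq_false (fun v => (hc.1 v).1)
    (fun u v huv h => (hc.lt_dist huv h).trans_le (Hgraph_dist_le u v))
    canColorAllBut_three_Hgraph_eq_false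

end Hgraph

section TwoCopies

/-- The colors greater than `m` used by `c`. -/
def colorsAbove {V : Type*} [Fintype V] (m : ℕ) (c : V → ℕ) : Finset ℕ :=
  ({v | m < c v} : Finset V).image c

theorem mem_colorsAbove {V : Type*} [Fintype V] {m i : ℕ} {c : V → ℕ} :
    i ∈ colorsAbove m c ↔ m < i ∧ ∃ v, c v = i := by
  simp only [colorsAbove, mem_image, mem_filter_univ]
  exact ⟨fun ⟨v, hv, h⟩ => ⟨h ▸ hv, v, h⟩, fun ⟨hi, v, h⟩ => ⟨v, h ▸ hi, h⟩⟩

theorem four_le_card_colorsAbove_three {k : ℕ} {c : Fin 15 → ℕ}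
    (hc : IsPackingColoring Hgraph k c) : 4 ≤ #(colorsAbove 3 c) := by
  have hinj : Set.InjOn c ({v | 3 < c v} : Finset (Fin 15)) := by
    rw [coe_filter_univ]
    exact hc.injOn_of_dist_le Hgraph_dist_le_four
  rw [colorsAbove, card_image_of_injOn hinj]
  exact four_le_card_three_lt_of_isPackingColoring_Hgraph hc

variable {V : Type*} {G : SimpleGraph V} {k : ℕ} {c : V → ℕ}

theorem IsPackingColoring.colorsAbove_subset_Ioc {W : Type*} [Fintype W]
    (hc : IsPackingColoring G k c) (f : W → V) (m : ℕ) : colorsAbove m (c ∘ f) ⊆ Ioc m k := by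
  intro i hi
  obtain ⟨hmi, v, rfl⟩ := mem_colorsAbove.1 hi
  exact mem_Ioc.2 ⟨hmi, (hc.1 (f v)).2⟩

theorem IsPackingColoring.colorsAbove_inter_subset_Ioo {W W' : Type*} [Fintype W] [Fintype W']
    (hc : IsPackingColoring G k c) {f : W → V} {g : W' → V} {D : ℕ} (hne : ∀ u v, f u ≠ g v)
    (hdist : ∀ u v, G.dist (f u) (g v) ≤ D) (m : ℕ) :
    colorsAbove m (c ∘ f) ∩ colorsAbove m (c ∘ g) ⊆ Ioo m D := by
  intro i hi
  obtain ⟨hf, hg⟩ := mem_inter.1 hi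
  obtain ⟨hmi, u, rfl⟩ := mem_colorsAbove.1 hf
  obtain ⟨-, v, hv⟩ := mem_colorsAbove.1 hg
  exact mem_Ioo.2 ⟨hmi, (hc.lt_dist (hne u v) hv.symm).trans_le (hdist u v)⟩

theorem IsPackingColoring.nine_le_of_two_copies_Hgraph (hc : IsPackingColoring G k c)
    (f g : Copy Hgraph G) (hne : ∀ u v, f u ≠ g v) (hdist : ∀ u v, G.dist (f u) (g v) ≤ 6) :
    9 ≤ k := by
  set A := colorsAbove 3 (c ∘ f)
  set B := colorsAbove 3 (c ∘ g)
  have hA : 4 ≤ #A := four_le_card_colorsAbove_three (hc.comp_copy Hgraph_connected f)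
  have hB : 4 ≤ #B := four_le_card_colorsAbove_three (hc.comp_copy Hgraph_connected g)
  have hunion : #(A ∪ B) ≤ k - 3 := by
    simpa using card_le_card
      (union_subset (hc.colorsAbove_subset_Ioc f 3) (hc.colorsAbove_subset_Ioc g 3))
  have hinter : #(A ∩ B) ≤ 2 := by
    simpa using card_le_card (hc.colorsAbove_inter_subset_Ioo hne hdist 3)
  have hcard := card_union_add_card_inter A B
  omega

end TwoCopies

theorem G₀_dist_copies_le_six (u v : Fin 15) :
    G₀.dist (glueLeft Hgraph pH qH u) (glueRight Hgraph pH qH v) ≤ 6 := by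
  obtain ⟨i, hi⟩ : ∃ i, HdistMatrix u (pH i) + 2 + HdistMatrix (qH i) v ≤ 6 := by
    revert u v
    decide +kernel
  calc G₀.dist (glueLeft Hgraph pH qH u) (glueRight Hgraph pH qH v)
      ≤ Hgraph.dist u (pH i) + 2 + Hgraph.dist (qH i) v :=
        dist_glueLeft_glueRight_le Hgraph_connected i u v
    _ ≤ HdistMatrix u (pH i) + 2 + HdistMatrix (qH i) v := by gcongr <;> exact Hgraph_dist_le _ _
    _ ≤ 6 := hi

theorem nine_le_of_isPackingColoring_G₀ {k : ℕ} {c : Fin 15 ⊕ Fin 15 ⊕ Fin 5 → ℕ}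
    (hc : IsPackingColoring G₀ k c) : 9 ≤ k :=
  hc.nine_le_of_two_copies_Hgraph (glueLeft Hgraph pH qH) (glueRight Hgraph pH qH)
    glueLeft_ne_glueRight G₀_dist_copies_le_six

/-- The packing chromatic number of `G₀` is at least `9`; that is, `G₀` admits
no `k`-packing coloring for any `k ≤ 8`. -/
theorem stmt8 :
    9 ≤ packingChromaticNumber G₀ ∧
    ∀ k ≤ 8, ¬ ∃ c : Fin 15 ⊕ Fin 15 ⊕ Fin 5 → ℕ, IsPackingColoring G₀ k c := by
  refine ⟨le_packingChromaticNumber fun _ _ => nine_le_of_isPackingColoring_G₀, ?_⟩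
  rintro k hk ⟨c, hc⟩
  have := nine_le_of_isPackingColoring_G₀ hc
  omega
end

section
/- In the graph G_0, the vertex x is at distance at most 4 from every vertex belonging to the copy H' or to the copy H''. -/
/-! The vertex `x` is adjacent to `w` in both copies of `H`, and every vertex of `H` is reached from
`w` by a path of length at most `3`. Distances are bounded through `edist`, whose triangle
inequality needs no connectivity; unlike `dist`, which is `0` between unreachable vertices, it is
finite only where a path exists. -/

open SimpleGraph

section EDist

variable {V W : Type*} {G : SimpleGraph V} {G' : SimpleGraph W}

theorem dist_le_of_edist_le {u v : V} {n : ℕ} (h : G.edist u v ≤ n) : G.dist u v ≤ n :=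
  ENat.toNat_le_of_le_natCast h

theorem edist_hom_le (f : G →g G') (u v : V) : G'.edist (f u) (f v) ≤ G.edist u v :=
  le_iInf fun p ↦ (edist_le (p.map f)).trans_eq (by rw [Walk.length_map])

theorem edist_le_edist_add_one_of_adj {u v : V} (h : G.Adj u v) (w : V) :
    G.edist u w ≤ G.edist v w + 1 := by
  rw [add_comm, ← edist_eq_one_iff_adj.mpr h]
  exact SimpleGraph.edist_triangle

theorem edist_hom_le_edist_add_one_of_adj (f : G →g G') {x : W} {r : V} (h : G'.Adj x (f r))
    (u : V) : G'.edist x (f u) ≤ G.edist r u + 1 :=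
  (edist_le_edist_add_one_of_adj h (f u)).trans <| by gcongr; exact edist_hom_le f r u

theorem edist_le_of_iterate_parent_eq {r : V} {parent : V → V}
    (hparent : ∀ v ≠ r, G.Adj v (parent v)) (n : ℕ) {v : V} (hv : parent^[n] v = r) :
    G.edist v r ≤ n := by
  induction n generalizing v with
  | zero => simp_all
  | succ n ih =>
    obtain rfl | hne := eq_or_ne v r
    · simp
    · calc G.edist v r ≤ G.edist (parent v) r + 1 :=
            edist_le_edist_add_one_of_adj (hparent v hne) r
        _ ≤ n + 1 := by gcongr; exact ih hv
        _ = (n + 1 : ℕ) := by norm_cast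

end EDist

section Glue

variable {V : Type*} (G : SimpleGraph V) (p q : Fin 5 → V)

/-- The first copy of `G` as an induced subgraph of `glue G p q`. -/
def glueFst : G ↪g glue G p q where
  toFun := Sum.inl
  inj' := Sum.inl_injective
  map_rel_iff' {a b} := by
    simpa [glue, G.adj_comm b a] using Adj.ne

/-- The second copy of `G` as an induced subgraph of `glue G p q`. -/
def glueSnd : G ↪g glue G p q where
  toFun := Sum.inr ∘ Sum.inl
  inj' := Sum.inr_injective.comp Sum.inl_injective
  map_rel_iff' {a b} := by
    simpa [glue, G.adj_comm b a] using Adj.ne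

theorem glue_adj_inr_inr_inl_iff {i : Fin 5} {a : V} :
    (glue G p q).Adj (Sum.inr (Sum.inr i)) (Sum.inl a) ↔ a = p i := by
  simp [glue]

theorem glue_adj_inr_inr_inr_inl_iff {i : Fin 5} {a : V} :
    (glue G p q).Adj (Sum.inr (Sum.inr i)) (Sum.inr (Sum.inl a)) ↔ a = q i := by
  simp [glue]

theorem glue_edist_inr_inr_inl_le (i : Fin 5) (u : V) :
    (glue G p q).edist (Sum.inr (Sum.inr i)) (Sum.inl u) ≤ G.edist (p i) u + 1 :=
  edist_hom_le_edist_add_one_of_adj (glueFst G p q).toHom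
    ((glue_adj_inr_inr_inl_iff G p q).mpr rfl) u

theorem glue_edist_inr_inr_inr_inl_le (i : Fin 5) (u : V) :
    (glue G p q).edist (Sum.inr (Sum.inr i)) (Sum.inr (Sum.inl u)) ≤ G.edist (q i) u + 1 :=
  edist_hom_le_edist_add_one_of_adj (glueSnd G p q).toHom
    ((glue_adj_inr_inr_inr_inl_iff G p q).mpr rfl) u

end Glue

/-- The parent map of a breadth-first spanning tree of `H` rooted at `w`, which is its own
parent. -/
def bfsParent : Fin 15 → Fin 15 :=
  ![1, 3, 1, 14, 5, 3, 5, 8, 10, 8, 14, 12, 10, 12, 14]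

theorem Hgraph_adj_bfsParent : ∀ v ≠ 14, Hgraph.Adj v (bfsParent v) := by
  simp only [Hgraph, fromRel_adj]
  decide

theorem bfsParent_iterate_three : ∀ v, bfsParent^[3] v = 14 := by
  decide

theorem Hgraph_eccent_w_le_three : Hgraph.eccent 14 ≤ 3 :=
  iSup_le fun v ↦ edist_comm.trans_le <|
    edist_le_of_iterate_parent_eq Hgraph_adj_bfsParent 3 (bfsParent_iterate_three v)

/-- In `G₀`, the vertex `x` is at distance at most `4` from every vertex of the
copy `H'` and from every vertex of the copy `H''`. -/
theorem stmt10 (u : Fin 15) :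
    G₀.dist (Sum.inr (Sum.inr 4)) (Sum.inl u) ≤ 4 ∧
    G₀.dist (Sum.inr (Sum.inr 4)) (Sum.inr (Sum.inl u)) ≤ 4 := by
  have edist_w_add_one_le : Hgraph.edist 14 u + 1 ≤ (4 : ℕ) :=
    calc Hgraph.edist 14 u + 1 ≤ 3 + 1 := by
          gcongr
          exact edist_le_eccent.trans Hgraph_eccent_w_le_three
      _ = (4 : ℕ) := by norm_num
  constructor <;> apply dist_le_of_edist_le
  · exact (glue_edist_inr_inr_inl_le Hgraph pH qH 4 u).trans edist_w_add_one_le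
  · exact (glue_edist_inr_inr_inr_inl_le Hgraph pH qH 4 u).trans edist_w_add_one_le
end

section
/- For every positive integer k, the graph G_k is connected and has diameter at most 2k+6: any two vertices of G_k are at distance at most 2k+6. -/
/-- The vertex type of `G_k`. -/
def Vt : ℕ → Type
  | 0 => Fin 15 ⊕ Fin 15 ⊕ Fin 5
  | k + 1 => Vt k ⊕ Vt k ⊕ Fin 5

/-- The five distinguished vertices `a,b,c,d,x` of `G_k`. -/
def distV : (k : ℕ) → Fin 5 → Vt k
  | 0, i => Sum.inr (Sum.inr i)
  | _ + 1, i => Sum.inr (Sum.inr i)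

/-- The graph `G_k`: for `k ≥ 1` it is obtained from two disjoint copies of
`G_{k-1}` by adding five new vertices, the `i`-th of which is adjacent exactly
to the `i`-th distinguished vertex of each of the two copies. -/
def Gk : (k : ℕ) → SimpleGraph (Vt k)
  | 0 => G₀
  | k + 1 => glue (Gk k) (distV k) (distV k)


/-!
Strengthen the diameter bound to: any two vertices of `G_k` are joined by a walk of length at most
`2k + 6` through a distinguished vertex. Gluing carries this along: if `u` and `v` lie in copies of
`G`, the same or not, and reach the attachment points of the `i`-th new vertex within `d` steps in
total, then both reach the new vertex itself at the cost of one more step each. The constant comes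
from `H`, where `d = 4` is enough for either choice of attachment points for `u` and for `v`.
-/

open Finset.HasAntidiagonal (antidiagonal mem_antidiagonal)

section Edist

variable {V W : Type*} {G : SimpleGraph V} {G' : SimpleGraph W} {u v : V}

lemma edist_map_le (f : G →g G') : G'.edist (f u) (f v) ≤ G.edist u v :=
  le_iInf fun walk => by simpa using SimpleGraph.edist_le (walk.map f)

lemma edist_le_one_of_adj (h : G.Adj u v) : G.edist u v ≤ 1 :=
  (SimpleGraph.edist_eq_one_iff_adj.mpr h).le

lemma edist_le_natCast_succ_iff {n : ℕ} :
    G.edist u v ≤ (n + 1 : ℕ) ↔ u = v ∨ ∃ w, G.Adj u w ∧ G.edist w v ≤ n := by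
  constructor
  · intro h
    obtain ⟨walk, hwalk⟩ :=
      G.exists_walk_of_edist_ne_top (ne_top_of_le_ne_top (ENat.natCast_ne_top _) h)
    rw [← hwalk] at h
    cases walk with
    | nil => exact .inl rfl
    | cons hadj tail =>
      exact .inr ⟨_, hadj, (SimpleGraph.edist_le tail).trans (by simpa using h)⟩
  · rintro (rfl | ⟨w, hadj, hw⟩)
    · simp
    · calc
        G.edist u v ≤ G.edist u w + G.edist w v := G.edist_triangle
        _ ≤ 1 + n := add_le_add (edist_le_one_of_adj hadj) hw
        _ = (n + 1 : ℕ) := by rw [add_comm, Nat.cast_succ]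

instance decidableEdistLE [Fintype V] [DecidableEq V] [DecidableRel G.Adj] :
    ∀ (n : ℕ) (u v : V), Decidable (G.edist u v ≤ n)
  | 0, u, v => decidable_of_iff (u = v) (by simp)
  | n + 1, _, v =>
    have (w : V) : Decidable (G.edist w v ≤ n) := decidableEdistLE n w v
    decidable_of_iff _ edist_le_natCast_succ_iff.symm

end Edist

lemma enat_add_le_natCast_iff {a b : ℕ∞} {d : ℕ} :
    a + b ≤ d ↔ ∃ s ∈ antidiagonal d, a ≤ s.1 ∧ b ≤ s.2 := by
  constructor
  · intro h
    have hsum : a + b ≠ ⊤ := ne_top_of_le_ne_top (ENat.natCast_ne_top d) h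
    lift a to ℕ using (WithTop.add_ne_top.mp hsum).1
    lift b to ℕ using (WithTop.add_ne_top.mp hsum).2
    norm_cast at h
    exact ⟨(a, d - a), mem_antidiagonal.mpr (by lia), le_rfl, by norm_cast; lia⟩
  · rintro ⟨s, hs, ha, hb⟩
    rw [← mem_antidiagonal.mp hs, Nat.cast_add]
    exact add_le_add ha hb

/-- For any vertices `u` and `v` there is an index `i` such that the distances from `u` to `p i` and
from `v` to `q i` add up to at most `d`. For `p = q` this is a walk from `u` to `v` through some
`p i`. For `p ≠ q` the vertices `u` and `v` are thought of as lying in different copies of `G`, with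
`p i` in the first copy and `q i` in the second both attached to the same new vertex. -/
def MeetWithin {V ι : Type*} (G : SimpleGraph V) (p q : ι → V) (d : ℕ) : Prop :=
  ∀ u v, ∃ i, G.edist u (p i) + G.edist v (q i) ≤ d

namespace MeetWithin

variable {V ι : Type*} {G : SimpleGraph V} {p q : ι → V} {d : ℕ}

lemma edist_le (h : MeetWithin G p p d) (u v : V) : G.edist u v ≤ d := by
  obtain ⟨i, hi⟩ := h u v
  rw [G.edist_comm (u := v)] at hi
  exact G.edist_triangle.trans hi

instance decidable [Fintype V] [DecidableEq V] [DecidableRel G.Adj] [Fintype ι] :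
    Decidable (MeetWithin G p q d) :=
  decidable_of_iff
    (∀ u v, ∃ i, ∃ s ∈ antidiagonal d, G.edist u (p i) ≤ s.1 ∧ G.edist v (q i) ≤ s.2)
    (by simp only [MeetWithin, enat_add_le_natCast_iff])

end MeetWithin

section Glue

variable {V : Type*} {G : SimpleGraph V} {p q : Fin 5 → V} {d : ℕ}

variable (G p q) in
/-- The inclusion of `G` as the first copy in `glue G p q`. -/
def glueFirst : G →g glue G p q where
  toFun := Sum.inl
  map_rel' h := by simp [glue, h, h.ne]

variable (G p q) in
/-- The inclusion of `G` as the second copy in `glue G p q`. -/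
def glueSecond : G →g glue G p q where
  toFun v := Sum.inr (Sum.inl v)
  map_rel' h := by simp [glue, h, h.ne]

lemma glue_adj_first_new (i : Fin 5) : (glue G p q).Adj (.inl (p i)) (.inr (.inr i)) := by
  simp [glue]

lemma glue_adj_second_new (i : Fin 5) :
    (glue G p q).Adj (.inr (.inl (q i))) (.inr (.inr i)) := by
  simp [glue]

lemma edist_glue_first_new_le (u : V) (i : Fin 5) :
    (glue G p q).edist (.inl u) (.inr (.inr i)) ≤ G.edist u (p i) + 1 :=
  SimpleGraph.edist_triangle.trans <|
    add_le_add (edist_map_le (glueFirst G p q)) (edist_le_one_of_adj (glue_adj_first_new i))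

lemma edist_glue_second_new_le (u : V) (i : Fin 5) :
    (glue G p q).edist (.inr (.inl u)) (.inr (.inr i)) ≤ G.edist u (q i) + 1 :=
  SimpleGraph.edist_triangle.trans <|
    add_le_add (edist_map_le (glueSecond G p q)) (edist_le_one_of_adj (glue_adj_second_new i))

lemma edist_glue_new_le (hd : ∀ u v, G.edist u v ≤ d) (x : V ⊕ V ⊕ Fin 5) (i : Fin 5) :
    (glue G p q).edist x (.inr (.inr i)) ≤ d + 2 := by
  have first_le (u : V) : (glue G p q).edist (.inl u) (.inr (.inr i)) ≤ d + 1 :=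
    (edist_glue_first_new_le u i).trans (by gcongr; exact hd _ _)
  have second_le (u : V) : (glue G p q).edist (.inr (.inl u)) (.inr (.inr i)) ≤ d + 1 :=
    (edist_glue_second_new_le u i).trans (by gcongr; exact hd _ _)
  have add_one_le : (d + 1 : ℕ∞) ≤ d + 2 := by gcongr; exact one_le_two
  match x with
  | .inl u => exact (first_le u).trans add_one_le
  | .inr (.inl u) => exact (second_le u).trans add_one_le
  | .inr (.inr j) =>
    calc
      _ ≤ (glue G p q).edist (.inr (.inr j)) (.inl (p j)) + _ := SimpleGraph.edist_triangle
      _ ≤ 1 + (d + 1) := add_le_add (edist_le_one_of_adj (glue_adj_first_new j).symm) (first_le _)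
      _ = d + 2 := by ring

theorem meetWithin_glue (hpp : MeetWithin G p p d) (hpq : MeetWithin G p q d)
    (hqq : MeetWithin G q q d) :
    MeetWithin (glue G p q) (fun i => .inr (.inr i)) (fun i => .inr (.inr i)) (d + 2) := by
  have step_out {a b a' b' : ℕ∞} (hab : a + b ≤ d) (ha : a' ≤ a + 1) (hb : b' ≤ b + 1) :
      a' + b' ≤ (d + 2 : ℕ) :=
    calc
      a' + b' ≤ (a + 1) + (b + 1) := add_le_add ha hb
      _ = (a + b) + 2 := by ring
      _ ≤ (d + 2 : ℕ) := by push_cast; gcongr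
  intro x y
  match x, y with
  | .inl u, .inl v =>
    obtain ⟨i, hi⟩ := hpp u v
    exact ⟨i, step_out hi (edist_glue_first_new_le u i) (edist_glue_first_new_le v i)⟩
  | .inl u, .inr (.inl v) =>
    obtain ⟨i, hi⟩ := hpq u v
    exact ⟨i, step_out hi (edist_glue_first_new_le u i) (edist_glue_second_new_le v i)⟩
  | .inr (.inl u), .inl v =>
    obtain ⟨i, hi⟩ := hpq v u
    rw [add_comm] at hi
    exact ⟨i, step_out hi (edist_glue_second_new_le u i) (edist_glue_first_new_le v i)⟩
  | .inr (.inl u), .inr (.inl v) =>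
    obtain ⟨i, hi⟩ := hqq u v
    exact ⟨i, step_out hi (edist_glue_second_new_le u i) (edist_glue_second_new_le v i)⟩
  | .inr (.inr j), y => exact ⟨j, by simpa using edist_glue_new_le hpp.edist_le y j⟩
  | x, .inr (.inr j) => exact ⟨j, by simpa using edist_glue_new_le hpp.edist_le x j⟩

end Glue

instance decidableRelHgraphAdj : DecidableRel Hgraph.Adj := fun u v =>
  decidable_of_iff _ (SimpleGraph.fromRel_adj _ u v).symm

lemma meetWithin_Hgraph_pH_pH : MeetWithin Hgraph pH pH 4 := by decide +kernel

lemma meetWithin_Hgraph_pH_qH : MeetWithin Hgraph pH qH 4 := by decide +kernel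

lemma meetWithin_Hgraph_qH_qH : MeetWithin Hgraph qH qH 4 := by decide +kernel

theorem meetWithin_Gk : ∀ k, MeetWithin (Gk k) (distV k) (distV k) (2 * k + 6)
  | 0 => meetWithin_glue meetWithin_Hgraph_pH_pH meetWithin_Hgraph_pH_qH meetWithin_Hgraph_qH_qH
  | k + 1 => meetWithin_glue (meetWithin_Gk k) (meetWithin_Gk k) (meetWithin_Gk k)

/-- For every positive integer `k`, the graph `G_k` is connected and any two of
its vertices are at distance at most `2k + 6`. -/
theorem stmt13 (k : ℕ) (hk : 1 ≤ k) :
    (Gk k).Connected ∧ ∀ u v, (Gk k).dist u v ≤ 2 * k + 6 := by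
  have hedist (u v : Vt k) : (Gk k).edist u v ≤ (2 * k + 6 : ℕ) := (meetWithin_Gk k).edist_le u v
  have hreach (u v : Vt k) : (Gk k).Reachable u v :=
    SimpleGraph.reachable_of_edist_ne_top (ne_top_of_le_ne_top (ENat.natCast_ne_top _) (hedist u v))
  have : Nonempty (Vt k) := ⟨distV k 0⟩
  refine ⟨⟨hreach⟩, fun u v => ?_⟩
  have h := hedist u v
  rw [← (hreach u v).coe_dist_eq_edist] at h
  exact_mod_cast h
end
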